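/- Let T and T' be two acute labeled triangles in the Euclidean plane. Then Λ(T,T') = M(T,T'), i.e. the infimum of Lipschitz constants over label-preserving homeomorphisms from T to T' equals max{‖e'₁‖/‖e₁‖, ‖e'₂‖/‖e₂‖, ‖e'₃‖/‖e₃‖, ‖h'₁‖/‖h₁‖, ‖h'₂‖/‖h₂‖, ‖h'₃‖/‖h₃‖}. Moreover the infimum is attained: there exists a label-preserving homeomorphism f : T → T' with L(f) = M(T,T'). -/

import Mathlib

open Metric Set ENNReal

noncomputable section

abbrev E2 := EuclideanSpace ℝ (Fin 2)

/-- The (filled) triangle with labeled vertices `v 0, v 1, v 2`. -/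
def Tri (v : Fin 3 → E2) : Set E2 := convexHull ℝ (Set.range v)

/-- `edgeLen v i` is the length of the edge opposite to vertex `i`. -/
def edgeLen (v : Fin 3 → E2) (i : Fin 3) : ℝ := dist (v (i + 1)) (v (i + 2))

/-- `altLen v i` is the length of the altitude from vertex `i`. -/
def altLen (v : Fin 3 → E2) (i : Fin 3) : ℝ :=
  Metric.infDist (v i) ((affineSpan ℝ ({v (i + 1), v (i + 2)} : Set E2) : Set E2))

/-- `ang v i` is the interior angle at vertex `i`. -/
def ang (v : Fin 3 → E2) (i : Fin 3) : ℝ :=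
  EuclideanGeometry.angle (v (i + 1)) (v i) (v (i + 2))

def IsAcute (v : Fin 3 → E2) : Prop := ∀ i, ang v i < Real.pi / 2

def IsNonObtuse (v : Fin 3 → E2) : Prop := ∀ i, ang v i ≤ Real.pi / 2

def triArea (v : Fin 3 → E2) : ℝ := edgeLen v 0 * altLen v 0 / 2

/-- `f` restricts to a label-preserving homeomorphism from the triangle on `v`
onto the triangle on `v'`. -/
def IsLabelHomeo (v v' : Fin 3 → E2) (f : E2 → E2) : Prop :=
  ContinuousOn f (Tri v) ∧ Set.BijOn f (Tri v) (Tri v') ∧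
  (∃ g : E2 → E2, ContinuousOn g (Tri v') ∧ Set.InvOn g f (Tri v) (Tri v')) ∧
  ∀ i, f (v i) = v' i

/-- The Lipschitz constant `L(f)` of `f` on the triangle on `v`,
`sup {dist (f x) (f y) / dist x y : x ≠ y}`, as a value in `ℝ≥0∞`. -/
def lipConst (v : Fin 3 → E2) (f : E2 → E2) : ℝ≥0∞ :=
  ⨆ x ∈ Tri v, ⨆ y ∈ Tri v, edist (f x) (f y) / edist x y

/-- `Λ(T,T')`: infimum of Lipschitz constants of label-preserving homeomorphisms. -/
def Lam (v v' : Fin 3 → E2) : ℝ≥0∞ :=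
  ⨅ (f : E2 → E2) (_ : IsLabelHomeo v v' f), lipConst v f

/-- `M(T,T')`: the max of the six ratios of edge lengths and altitude lengths. -/
def Mdist (v v' : Fin 3 → E2) : ℝ :=
  max (max (max (edgeLen v' 0 / edgeLen v 0) (edgeLen v' 1 / edgeLen v 1))
        (edgeLen v' 2 / edgeLen v 2))
      (max (max (altLen v' 0 / altLen v 0) (altLen v' 1 / altLen v 1))
        (altLen v' 2 / altLen v 2))

/-!
Lower bound: a label-preserving homeomorphism `f` maps boundary points to boundary points, because
the unit circle is not null-homotopic in the punctured plane, hence by connectedness it maps each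
edge to the corresponding edge. In an acute triangle the foot of the altitude from `v i` lies on the
opposite edge, so its image lies on the opposite edge of the target, at distance at least `h'ᵢ` from
`v' i`; hence `L(f) ≥ h'ᵢ / hᵢ`. The bounds `L(f) ≥ e'ᵢ / eᵢ` are clear.

Upper bound: let `L` be the largest of the six ratios. If `L = h'ᵢ / hᵢ`, cut both triangles along
this altitude and map the two halves linearly. The pieces of the base have length `√(eⱼ² - hᵢ²)`, so
`e'ⱼ ≤ L eⱼ` and `h'ᵢ = L hᵢ` show that they are stretched by at most `L`. If `L = e'ᵢ / eᵢ`, then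
`hⱼ = eᵢ sin θₖ` and `h'ⱼ ≤ L hⱼ` give `θ'ₖ ≤ θₖ`, and likewise `θ'ⱼ ≤ θⱼ`. Pass through the
triangle with base `e'ᵢ` and angles `θⱼ`, `θ'ₖ`: changing one angle at a time leaves an altitude
ratio equal to that of the base, so each of the two steps is an instance of the first case, with the
constants `L` and `1`.
-/

/-- The inclusion of the unit circle in the punctured complex plane. -/
def circleInclusion : C(Circle, {z : ℂ // z ≠ 0}) := ⟨fun z => ⟨z, z.coe_ne_zero⟩, by fun_prop⟩

theorem not_nullhomotopic_circleInclusion : ¬ circleInclusion.Nullhomotopic := by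
  rintro ⟨c, ⟨H⟩⟩
  have cov := Complex.isCoveringMap_exp
  let logc : C(Circle, ℂ) := ContinuousMap.const _ (Complex.log c)
  have hlogc : ∀ z, H.symm (0, z) = ⟨Complex.exp (logc z), Complex.exp_ne_zero _⟩ := fun z =>
    Subtype.ext (by simp [logc, Complex.exp_log c.2])
  let G := cov.liftHomotopy H.symm logc hlogc
  have exp_G : ∀ z : Circle, Complex.exp (G (1, z)) = z := fun z => by
    have lifts := congrFun (cov.liftHomotopy_lifts H.symm logc hlogc) (1, z)
    exact (congrArg Subtype.val lifts).trans (by simp [circleInclusion])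
  have G_circleExp : (fun t : ℝ => G (1, Circle.exp t)) =
      fun t : ℝ => G (1, Circle.exp 0) + t * Complex.I := by
    apply cov.eq_of_comp_eq (a := (0 : ℝ)) (by fun_prop) (by fun_prop)
    · funext t
      exact Subtype.ext (by simp [exp_G, Complex.exp_add])
    · simp
  simpa [Real.pi_ne_zero] using congrFun G_circleExp (2 * Real.pi)

section Boundary

variable {E F : Type*} [AddCommGroup E] [Module ℝ E] [TopologicalSpace E]
  [IsTopologicalAddGroup E] [ContinuousSMul ℝ E] {A : Set E} {x : E}

theorem map_notMem_interior_complex {B : Set ℂ} {f : E → ℂ} {g : ℂ → E} (hA : Convex ℝ A)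
    (hA' : (interior A).Nonempty) (hf : ContinuousOn f A) (hinj : InjOn f A)
    (hg : ContinuousOn g B) (hgA : MapsTo g B A) (hfg : RightInvOn g f B) (hx : x ∈ A)
    (hxA : x ∉ interior A) : f x ∉ interior B := by
  intro hxB
  obtain ⟨r, hr, hball⟩ := nhds_basis_closedBall.mem_iff.1 (mem_interior_iff_mem_nhds.1 hxB)
  obtain ⟨c, hc⟩ := hA'
  let γ : Circle → ℂ := fun z => f x + r * z
  have hγB : ∀ z, γ z ∈ B := fun z => hball (by simp [γ, abs_of_pos hr, Circle.norm_coe])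
  have hγ_ne : ∀ z, γ z ≠ f x := fun z => by simp [γ, hr.ne']
  have hgγ : Continuous fun p : unitInterval × Circle => g (γ p.2) :=
    hg.comp_continuous (by fun_prop) fun p => hγB p.2
  -- Contracting `g ∘ γ` to the interior point `c` never meets the boundary point `x`, so applying
  -- `f` to it contracts `γ` without meeting `f x`.
  let P : unitInterval × Circle → E := fun p => (1 - p.1 : ℝ) • c + (p.1 : ℝ) • g (γ p.2)
  have hPA : ∀ p, P p ∈ A := fun p =>
    hA (interior_subset hc) (hgA (hγB p.2)) (by simpa using p.1.2.2) p.1.2.1 (by simp)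
  have hPx : ∀ p, P p ≠ x := by
    rintro ⟨t, z⟩ hP
    rcases t.2.2.eq_or_lt with ht | ht
    · apply hγ_ne z
      simp [← hP, P, ht, hfg (hγB z)]
    · exact hxA (hP ▸ hA.combo_interior_self_mem_interior hc (hgA (hγB z)) (sub_pos.2 ht) t.2.1
        (by simp))
  have hP : Continuous P :=
    ((by fun_prop : Continuous fun p : unitInterval × Circle => (1 - p.1 : ℝ)).smul
      continuous_const).add (Continuous.smul (by fun_prop) hgγ)
  have hfP : Continuous fun p => f (P p) := hf.comp_continuous hP hPA
  have hfP_ne : ∀ p, (f (P p) - f x) / r ≠ 0 := fun p =>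
    div_ne_zero (sub_ne_zero.2 fun h => hPx p (hinj (hPA p) hx h)) (by exact_mod_cast hr.ne')
  let H : ContinuousMap.Homotopy
      (ContinuousMap.const Circle ⟨(f c - f x) / r, by simpa [P] using hfP_ne (0, 1)⟩)
      circleInclusion :=
    { toFun := fun p => ⟨(f (P p) - f x) / r, hfP_ne p⟩
      continuous_toFun := ((hfP.sub continuous_const).div_const _).subtype_mk hfP_ne
      map_zero_left := fun z => by simp [P]
      map_one_left := fun z => by
        apply Subtype.ext
        simp [P, hfg (hγB z), γ, circleInclusion, hr.ne'] }
  exact not_nullhomotopic_circleInclusion ⟨_, ⟨H.symm⟩⟩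

theorem notMem_interior_of_finrank_eq_two [NormedAddCommGroup F] [NormedSpace ℝ F]
    (hF : Module.finrank ℝ F = 2) {B : Set F} {f : E → F} {g : F → E} (hA : Convex ℝ A)
    (hA' : (interior A).Nonempty) (hf : ContinuousOn f A) (hinj : InjOn f A)
    (hg : ContinuousOn g B) (hgA : MapsTo g B A) (hfg : RightInvOn g f B) (hx : x ∈ A)
    (hxA : x ∉ interior A) : f x ∉ interior B := by
  have : FiniteDimensional ℝ F := Module.finite_of_finrank_eq_succ hF
  let e : F ≃L[ℝ] ℂ := .ofFinrankEq (hF.trans Complex.finrank_real_complex.symm)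
  have key := map_notMem_interior_complex (B := e.symm ⁻¹' B) (f := e ∘ f) (g := g ∘ e.symm) hA hA'
    (e.continuous.comp_continuousOn hf) (e.injective.comp_injOn hinj)
    (hg.comp e.symm.continuous.continuousOn (mapsTo_preimage _ _))
    (hgA.comp (mapsTo_preimage _ _)) (fun y hy => by simp [hfg hy]) hx hxA
  have := e.symm.toHomeomorph.preimage_interior B
  intro h
  apply key
  rw [← e.symm.coe_toHomeomorph, ← this]
  simpa using h

end Boundary

theorem exists_subset_of_isPreconnected {X ι : Type*} [TopologicalSpace X] [Finite ι]
    {s : Set X} {C : ι → Set X} (hs : IsPreconnected s) (hne : s.Nonempty)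
    (hC : ∀ i, IsClosed (C i)) (hsC : s ⊆ ⋃ i, C i)
    (hdisj : ∀ i j, i ≠ j → s ∩ (C i ∩ C j) = ∅) : ∃ i, s ⊆ C i := by
  obtain ⟨x, hx⟩ := hne
  obtain ⟨i, hi⟩ := mem_iUnion.1 (hsC hx)
  have hrest : IsClosed (⋃ j ∈ {j | j ≠ i}, C j) :=
    (Set.toFinite _).isClosed_biUnion fun j _ => hC j
  have hcov : s ⊆ C i ∪ ⋃ j ∈ {j | j ≠ i}, C j := fun y hy => by
    obtain ⟨j, hj⟩ := mem_iUnion.1 (hsC hy)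
    by_cases h : j = i
    · exact .inl (h ▸ hj)
    · exact .inr (mem_biUnion h hj)
  have hdis : s ∩ (C i ∩ ⋃ j ∈ {j | j ≠ i}, C j) = ∅ := by
    simp only [inter_iUnion, iUnion_eq_empty]
    exact fun j hj => hdisj i j (Ne.symm hj)
  rcases isPreconnected_iff_subset_of_disjoint_closed.1 hs _ _ (hC i) hrest hcov hdis with h | h
  · exact ⟨i, h⟩
  · exact (notMem_empty x (hdis ▸ ⟨hx, hi, h hx⟩)).elim

theorem segment_subset_affineSpan {E : Type*} [AddCommGroup E] [Module ℝ E] (x y : E) :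
    segment ℝ x y ⊆ affineSpan ℝ {x, y} :=
  (affineSpan ℝ {x, y}).convex.segment_subset (left_mem_affineSpan_pair ℝ x y)
    (right_mem_affineSpan_pair ℝ x y)

theorem lipschitzWith_of_dist_apply_le {ι : Type*} [Fintype ι] {K : NNReal}
    {f : EuclideanSpace ℝ ι → EuclideanSpace ℝ ι}
    (hf : ∀ x y i, dist (f x i) (f y i) ≤ K * dist (x i) (y i)) : LipschitzWith K f := by
  refine LipschitzWith.of_dist_le_mul fun x y => ?_
  rw [EuclideanSpace.dist_eq, EuclideanSpace.dist_eq, ← Real.sqrt_sq K.coe_nonneg,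
    ← Real.sqrt_mul (sq_nonneg _), Finset.mul_sum]
  gcongr with i
  rw [← mul_pow]
  gcongr
  exact hf x y i

theorem isGreatest_range_max_max {α : Type*} [LinearOrder α] (r : Fin 3 → α) :
    IsGreatest (range r) (max (max (r 0) (r 1)) (r 2)) := by
  have range_eq : range r = {r 0} ∪ {r 1} ∪ {r 2} := by
    ext x
    simp only [mem_range, Fin.exists_fin_succ, mem_union, mem_singleton_iff]
    simp [eq_comm, or_assoc]
  exact range_eq ▸ (isGreatest_singleton.union isGreatest_singleton).union isGreatest_singleton

section Congruence

variable {ι V V' P P' : Type*} [NormedAddCommGroup V] [InnerProductSpace ℝ V] [MetricSpace P]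
  [NormedAddTorsor V P] [NormedAddCommGroup V'] [InnerProductSpace ℝ V'] [MetricSpace P']
  [NormedAddTorsor V' P']

theorem inner_vsub_vsub_eq_dist (p q r : P) : inner ℝ (q -ᵥ p) (r -ᵥ p) =
    (dist q p * dist q p + dist r p * dist r p - dist q r * dist q r) / 2 := by
  rw [real_inner_eq_norm_mul_self_add_norm_mul_self_sub_norm_sub_mul_self_div_two,
    vsub_sub_vsub_cancel_right, dist_eq_norm_vsub V, dist_eq_norm_vsub V, dist_eq_norm_vsub V]

theorem exists_affineIsometryEquiv_of_congruent {b : AffineBasis ι ℝ P}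
    {b' : AffineBasis ι ℝ P'} (h : Congruent b b') : ∃ φ : P ≃ᵃⁱ[ℝ] P', ⇑φ ∘ b = b' := by
  obtain ⟨i⟩ := b.nonempty
  let e : V ≃ₗ[ℝ] V' := (b.basisOf i).equiv (b'.basisOf i) (Equiv.refl _)
  have e_vsub : ∀ j, e (b j -ᵥ b i) = b' j -ᵥ b' i := fun j => by
    by_cases hj : j = i
    · simp [hj]
    · have := (b.basisOf i).equiv_apply ⟨j, hj⟩ (b'.basisOf i) (Equiv.refl _)
      rwa [Equiv.refl_apply, b.basisOf_apply, b'.basisOf_apply] at this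
  have inner_e : (innerₗ V').compl₁₂ (e : V →ₗ[ℝ] V') (e : V →ₗ[ℝ] V') = innerₗ V := by
    refine LinearMap.ext_basis (b.basisOf i) (b.basisOf i) fun j k => ?_
    simp only [LinearMap.compl₁₂_apply, LinearEquiv.coe_coe, innerₗ_apply_apply,
      b.basisOf_apply, e_vsub, inner_vsub_vsub_eq_dist, h.dist_eq]
  let φ := AffineIsometryEquiv.mk' (fun p => e (p -ᵥ b i) +ᵥ b' i)
    (e.isometryOfInner fun x y => LinearMap.congr_fun₂ inner_e x y) (b i)
    fun p => by rw [vsub_self, map_zero, zero_vadd]; rfl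
  exact ⟨φ, funext fun j => by simp [φ, e_vsub]⟩

end Congruence

/-- `IsLabeling i j k` says that `{i, j, k} = {0, 1, 2}`. -/
def IsLabeling (i j k : Fin 3) : Prop := i ≠ j ∧ j ≠ k ∧ k ≠ i

section Labeling

variable {i j k : Fin 3}

theorem isLabeling_add_one_add_two (i : Fin 3) : IsLabeling i (i + 1) (i + 2) := by
  unfold IsLabeling
  decide +revert

theorem exists_isLabeling (h : i ≠ j) : ∃ k, IsLabeling i j k := by
  unfold IsLabeling
  decide +revert

theorem IsLabeling.rotate (h : IsLabeling i j k) : IsLabeling j k i := ⟨h.2.1, h.2.2, h.1⟩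

theorem IsLabeling.swap (h : IsLabeling i j k) : IsLabeling i k j :=
  ⟨h.2.2.symm, h.2.1.symm, h.1.symm⟩

theorem IsLabeling.eq_add_one_or (h : IsLabeling i j k) :
    j = i + 1 ∧ k = i + 2 ∨ j = i + 2 ∧ k = i + 1 := by
  unfold IsLabeling at h
  decide +revert

theorem IsLabeling.eq_or (h : IsLabeling i j k) (l : Fin 3) : l = i ∨ l = j ∨ l = k := by
  unfold IsLabeling at h
  decide +revert

theorem IsLabeling.bijective (h : IsLabeling i j k) : Function.Bijective ![i, j, k] := by
  unfold IsLabeling at h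
  decide +revert

theorem IsLabeling.sum_eq {M : Type*} [AddCommMonoid M] (hl : IsLabeling i j k) (g : Fin 3 → M) :
    ∑ l, g l = g i + g j + g k :=
  (hl.bijective.sum_comp g).symm.trans (Fin.sum_univ_three _)

theorem IsLabeling.edgeLen_eq (h : IsLabeling i j k) (v : Fin 3 → E2) :
    edgeLen v i = dist (v j) (v k) := by
  rcases h.eq_add_one_or with ⟨rfl, rfl⟩ | ⟨rfl, rfl⟩
  · rfl
  · exact dist_comm _ _

theorem IsLabeling.ang_eq (h : IsLabeling i j k) (v : Fin 3 → E2) :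
    ang v i = EuclideanGeometry.angle (v j) (v i) (v k) := by
  rcases h.eq_add_one_or with ⟨rfl, rfl⟩ | ⟨rfl, rfl⟩
  · rfl
  · exact EuclideanGeometry.angle_comm _ _ _

theorem IsLabeling.altLen_eq (h : IsLabeling i j k) (v : Fin 3 → E2) :
    altLen v i = infDist (v i) (affineSpan ℝ ({v j, v k} : Set E2)) := by
  rcases h.eq_add_one_or with ⟨rfl, rfl⟩ | ⟨rfl, rfl⟩
  · rfl
  · rw [altLen, pair_comm]

theorem IsLabeling.affineIndependent_comp_iff (hl : IsLabeling i j k) {v : Fin 3 → E2} :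
    AffineIndependent ℝ (v ∘ ![i, j, k]) ↔ AffineIndependent ℝ v :=
  affineIndependent_equiv (.ofBijective _ hl.bijective)

theorem IsLabeling.not_collinear (hl : IsLabeling i j k) {v : Fin 3 → E2}
    (hv : AffineIndependent ℝ v) : ¬ Collinear ℝ {v i, v j, v k} := by
  rw [← affineIndependent_iff_not_collinear_set]
  have comp_eq : v ∘ ![i, j, k] = ![v i, v j, v k] := (FinVec.map_eq v ![i, j, k]).symm
  exact comp_eq ▸ hl.affineIndependent_comp_iff.2 hv

end Labeling

section Trigonometry

open Real

variable {v : Fin 3 → E2} {i j k : Fin 3}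

theorem edgeLen_pos (hv : AffineIndependent ℝ v) (i : Fin 3) : 0 < edgeLen v i :=
  dist_pos.2 (hv.injective.ne (isLabeling_add_one_add_two i).2.1)

theorem ang_pos (hv : AffineIndependent ℝ v) (i : Fin 3) : 0 < ang v i :=
  EuclideanGeometry.angle_pos_of_not_collinear
    ((isLabeling_add_one_add_two i).rotate.rotate.swap.rotate.not_collinear hv)

theorem sin_ang_pos (hv : AffineIndependent ℝ v) (i : Fin 3) : 0 < sin (ang v i) :=
  EuclideanGeometry.sin_pos_of_not_collinear
    ((isLabeling_add_one_add_two i).rotate.rotate.swap.rotate.not_collinear hv)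

theorem ang_nonneg (v : Fin 3 → E2) (i : Fin 3) : 0 ≤ ang v i :=
  EuclideanGeometry.angle_nonneg _ _ _

theorem IsAcute.cos_ang_pos (h : IsAcute v) (i : Fin 3) : 0 < cos (ang v i) :=
  cos_pos_of_mem_Ioo ⟨by linarith [ang_nonneg v i, pi_pos], h i⟩

theorem IsLabeling.ang_add_ang_add_ang (h : IsLabeling i j k) (hv : AffineIndependent ℝ v) :
    ang v i + ang v j + ang v k = π := by
  rw [h.swap.ang_eq, h.rotate.swap.ang_eq, h.rotate.rotate.swap.ang_eq, ← add_rotate]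
  exact EuclideanGeometry.angle_add_angle_add_angle_eq_pi _ (hv.injective.ne h.2.1.symm)

theorem IsLabeling.edgeLen_mul_sin_ang (h : IsLabeling i j k) (v : Fin 3 → E2) :
    edgeLen v i * sin (ang v j) = edgeLen v j * sin (ang v i) := by
  rw [h.edgeLen_eq, h.rotate.edgeLen_eq, h.swap.ang_eq, h.rotate.swap.ang_eq, mul_comm,
    EuclideanGeometry.law_sin, mul_comm]

theorem IsLabeling.edgeLen_mul_cos_ang_add (h : IsLabeling i j k) (hv : AffineIndependent ℝ v) :
    edgeLen v k * cos (ang v j) + edgeLen v j * cos (ang v k) = edgeLen v i := by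
  have law_cos_j := EuclideanGeometry.law_cos (v i) (v j) (v k)
  have law_cos_k := EuclideanGeometry.law_cos (v i) (v k) (v j)
  rw [← h.rotate.swap.ang_eq, ← h.rotate.rotate.edgeLen_eq, ← h.swap.edgeLen_eq,
    ← h.rotate.swap.edgeLen_eq] at law_cos_j
  rw [← h.rotate.rotate.ang_eq, ← h.rotate.rotate.edgeLen_eq, ← h.edgeLen_eq,
    ← h.rotate.swap.edgeLen_eq] at law_cos_k
  apply mul_left_cancel₀ (edgeLen_pos hv i).ne'
  linarith

end Trigonometry

/-- The triangle whose altitude from vertex `0` has length `h` and splits the opposite edge into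
pieces of lengths `a` and `b`; the foot of that altitude is the origin. -/
def altTri (a b h : ℝ) : Fin 3 → E2 := ![!₂[0, h], !₂[-a, 0], !₂[b, 0]]

section AltTri

variable {a b h : ℝ}

theorem affineIndependent_altTri (hab : 0 < a + b) (hh : 0 < h) :
    AffineIndependent ℝ (altTri a b h) := by
  rw [affineIndependent_iff_of_fintype]
  intro w hw hwv
  rw [Finset.weightedVSub_eq_linear_combination _ hw, Fin.sum_univ_three] at hwv
  rw [Fin.sum_univ_three] at hw
  have coord_zero : -(w 1 * a) + w 2 * b = 0 := by simpa [altTri] using congrArg (· 0) hwv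
  have coord_one : w 0 = 0 := by simpa [altTri, hh.ne'] using congrArg (· 1) hwv
  have hw2 : w 2 = 0 := by
    refine (mul_eq_zero.1 ?_).resolve_right hab.ne'
    linear_combination coord_zero + a * hw - a * coord_one
  intro i
  fin_cases i
  · exact coord_one
  · change w 1 = 0
    linarith
  · exact hw2

theorem edgeLen_altTri_zero (hab : 0 < a + b) : edgeLen (altTri a b h) 0 = a + b := by
  rw [(isLabeling_add_one_add_two 0).swap.edgeLen_eq, EuclideanSpace.dist_eq]
  simpa [altTri, Real.dist_eq, add_comm] using Real.sqrt_sq hab.le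

theorem edgeLen_altTri_one : edgeLen (altTri a b h) 1 = √(b ^ 2 + h ^ 2) := by
  rw [edgeLen, EuclideanSpace.dist_eq]
  simp [altTri, Real.dist_eq]

theorem edgeLen_altTri_two : edgeLen (altTri a b h) 2 = √(a ^ 2 + h ^ 2) := by
  rw [edgeLen, EuclideanSpace.dist_eq]
  simp [altTri, Real.dist_eq, add_comm]

theorem zero_mem_segment_altTri (ha : 0 < a) (hb : 0 < b) :
    0 ∈ segment ℝ (altTri a b h 1) (altTri a b h 2) := by
  have hab : 0 < a + b := add_pos ha hb
  refine ⟨b / (a + b), a / (a + b), by positivity, by positivity, ?_, ?_⟩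
  · rw [← add_div, add_comm b, div_self hab.ne']
  · ext i
    fin_cases i
    · simp only [altTri, Matrix.cons_val_one, Matrix.cons_val_zero, Matrix.cons_val,
        Fin.zero_eta, PiLp.add_apply, PiLp.smul_apply, smul_eq_mul, mul_neg, PiLp.zero_apply]
      ring
    · simp [altTri]

theorem mem_tri_altTri_iff (ha : 0 < a) (hb : 0 < b) (hh : 0 < h) {x : E2} :
    x ∈ Tri (altTri a b h) ↔ x 1 / h ∈ Icc 0 1 ∧
      x 0 ∈ Icc (-(a * (1 - x 1 / h))) (b * (1 - x 1 / h)) := by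
  let S : Set E2 := {x | x 1 / h ∈ Icc 0 1 ∧ x 0 ∈ Icc (-(a * (1 - x 1 / h))) (b * (1 - x 1 / h))}
  have convex_S : Convex ℝ S := by
    rintro x ⟨⟨hx, hx'⟩, hxa, hxb⟩ y ⟨⟨hy, hy'⟩, hya, hyb⟩ s t hs ht hst
    obtain rfl : s = 1 - t := by linarith
    have coord_zero : ((1 - t) • x + t • y) 0 = (1 - t) * x 0 + t * y 0 := by simp
    have coord_one : ((1 - t) • x + t • y) 1 / h = (1 - t) * (x 1 / h) + t * (y 1 / h) := by
      simp [add_div, mul_div_assoc]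
    rw [mem_ofPred_eq, coord_zero, coord_one]
    exact ⟨⟨by positivity, by nlinarith⟩, by nlinarith, by nlinarith⟩
  refine ⟨fun hx => convexHull_min (t := S) ?_ convex_S hx, ?_⟩
  · rintro _ ⟨i, rfl⟩
    fin_cases i
    · simp [S, altTri, hh.ne']
    · simpa [S, altTri] using (by linarith : -a ≤ b)
    · simpa [S, altTri] using (by linarith : -a ≤ b)
  · rintro ⟨⟨hx, -⟩, hxa, hxb⟩
    have hab : 0 < a + b := add_pos ha hb
    refine mem_convexHull_of_exists_fintype
      ![x 1 / h, (b * (1 - x 1 / h) - x 0) / (a + b), (x 0 + a * (1 - x 1 / h)) / (a + b)]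
      (altTri a b h) ?_ ?_ (fun i => mem_range_self i) ?_
    · simpa [Fin.forall_fin_succ, hx] using
        ⟨div_nonneg (by linarith) hab.le, div_nonneg (by linarith) hab.le⟩
    · simp only [Fin.sum_univ_three, Matrix.cons_val_zero, Matrix.cons_val_one, Matrix.cons_val]
      field_simp
      ring
    · ext i
      fin_cases i
      · simp only [altTri, Fin.sum_univ_three, Matrix.cons_val_zero, Matrix.cons_val_one,
          Matrix.cons_val, Fin.zero_eta, PiLp.add_apply, PiLp.smul_apply, smul_eq_mul, mul_zero,
          mul_neg, zero_add]
        field_simp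
        ring
      · simp [altTri, Fin.sum_univ_three, hh.ne']

end AltTri

section TriBasis

variable {v v' : Fin 3 → E2} {i j k : Fin 3} {a b h : ℝ}

/-- The vertices of a nondegenerate triangle as an affine basis of the plane. -/
def triBasis (hv : AffineIndependent ℝ v) : AffineBasis (Fin 3) ℝ E2 :=
  ⟨v, hv, by rw [hv.affineSpan_eq_top_iff_card_eq_finrank_add_one]; simp⟩

theorem coord_triBasis_of_ne (hv : AffineIndependent ℝ v) (hij : i ≠ j) :
    (triBasis hv).coord i (v j) = 0 :=
  (triBasis hv).coord_apply_ne hij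

theorem apply_mem_tri (v : Fin 3 → E2) (i : Fin 3) : v i ∈ Tri v :=
  subset_convexHull ℝ _ (mem_range_self i)

theorem IsLabeling.tri_comp (hl : IsLabeling i j k) (v : Fin 3 → E2) :
    Tri (v ∘ ![i, j, k]) = Tri v := by
  rw [Tri, hl.bijective.surjective.range_comp, Tri]

theorem exists_affineIsometryEquiv_of_edgeLen_eq (hv : AffineIndependent ℝ v)
    (hv' : AffineIndependent ℝ v') (h : ∀ i, edgeLen v i = edgeLen v' i) :
    ∃ φ : E2 ≃ᵃⁱ[ℝ] E2, φ ∘ v = v' := by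
  refine exists_affineIsometryEquiv_of_congruent (b := triBasis hv) (b' := triBasis hv')
    (congruent_iff_pairwise_dist_eq.2 fun i j hij => ?_)
  obtain ⟨k, hk⟩ := exists_isLabeling hij
  have hk := hk.rotate.rotate
  exact (hk.edgeLen_eq v).symm.trans ((h k).trans (hk.edgeLen_eq v'))

theorem dist_altTri_zero_zero (hh : 0 ≤ h) : dist (altTri a b h 0) 0 = h := by
  rw [EuclideanSpace.dist_eq]
  simp [altTri, Real.sqrt_sq hh]

theorem altLen_altTri (ha : 0 < a) (hb : 0 < b) (hh : 0 < h) : altLen (altTri a b h) 0 = h := by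
  have hfoot : 0 ∈ affineSpan ℝ {altTri a b h 1, altTri a b h 2} :=
    segment_subset_affineSpan _ _ (zero_mem_segment_altTri ha hb)
  have coord_one : ∀ p ∈ affineSpan ℝ {altTri a b h 1, altTri a b h 2}, p 1 = 0 := fun p hp => by
    obtain ⟨r, rfl⟩ := mem_affineSpan_pair_iff_exists_lineMap_eq.1 hp
    simp [altTri, AffineMap.lineMap_apply]
  refine le_antisymm ?_ ((le_infDist ⟨0, hfoot⟩).2 fun {p} hp => ?_)
  · exact (infDist_le_dist_of_mem hfoot).trans_eq (dist_altTri_zero_zero hh.le)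
  · calc
      h ≤ dist (altTri a b h 0 1) (p 1) := by simp [altTri, coord_one p hp, le_abs_self]
      _ ≤ dist (altTri a b h 0) p := PiLp.dist_apply_le _ _ _

theorem altLen_affineIsometryEquiv_comp (φ : E2 ≃ᵃⁱ[ℝ] E2) (v : Fin 3 → E2) (i : Fin 3) :
    altLen (φ ∘ v) i = altLen v i := by
  have map_span := congrArg (↑· : AffineSubspace ℝ E2 → Set E2)
    (AffineSubspace.map_span φ.toAffineEquiv.toAffineMap {v (i + 1), v (i + 2)})
  rw [image_pair] at map_span
  exact (congrArg (infDist (φ (v i))) map_span.symm).trans (infDist_image φ.isometry)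

theorem tri_affineIsometryEquiv_comp (φ : E2 ≃ᵃⁱ[ℝ] E2) (v : Fin 3 → E2) :
    Tri (φ ∘ v) = φ '' Tri v := by
  rw [Tri, range_comp, Tri]
  exact (φ.toAffineEquiv.toAffineMap.image_convexHull _).symm

open Real

theorem IsLabeling.exists_altTri (hl : IsLabeling i j k) (hv : AffineIndependent ℝ v) :
    ∃ φ : E2 ≃ᵃⁱ[ℝ] E2, φ ∘ altTri (edgeLen v k * cos (ang v j)) (edgeLen v j * cos (ang v k))
      (edgeLen v j * sin (ang v k)) = v ∘ ![i, j, k] := by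
  have base := hl.edgeLen_mul_cos_ang_add hv
  have hbase : 0 < edgeLen v k * cos (ang v j) + edgeLen v j * cos (ang v k) :=
    base ▸ edgeLen_pos hv i
  have leg {e θ : ℝ} (he : 0 < e) : √((e * cos θ) ^ 2 + (e * sin θ) ^ 2) = e := by
    rw [mul_pow, mul_pow, ← mul_add, cos_sq_add_sin_sq, mul_one, sqrt_sq he.le]
  refine exists_affineIsometryEquiv_of_edgeLen_eq (affineIndependent_altTri hbase
    (mul_pos (edgeLen_pos hv j) (sin_ang_pos hv k))) (hl.affineIndependent_comp_iff.2 hv)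
    fun l => ?_
  fin_cases l
  · exact (edgeLen_altTri_zero hbase).trans (base.trans (hl.edgeLen_eq v))
  · exact edgeLen_altTri_one.trans ((leg (edgeLen_pos hv j)).trans (hl.rotate.edgeLen_eq v))
  · rw [hl.rotate.edgeLen_mul_sin_ang]
    exact edgeLen_altTri_two.trans
      ((leg (edgeLen_pos hv k)).trans (hl.rotate.rotate.edgeLen_eq v))

theorem IsLabeling.altLen_eq_edgeLen_mul_sin_ang (hl : IsLabeling i j k)
    (hv : AffineIndependent ℝ v) (hT : IsAcute v) :
    altLen v i = edgeLen v j * sin (ang v k) := by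
  obtain ⟨φ, hφ⟩ := hl.exists_altTri hv
  have : altLen (v ∘ ![i, j, k]) 0 = altLen v i := (hl.altLen_eq v).symm
  rw [← this, ← hφ, altLen_affineIsometryEquiv_comp]
  exact altLen_altTri (mul_pos (edgeLen_pos hv k) (hT.cos_ang_pos j))
    (mul_pos (edgeLen_pos hv j) (hT.cos_ang_pos k)) (mul_pos (edgeLen_pos hv j) (sin_ang_pos hv k))

theorem IsLabeling.exists_mem_segment_dist_eq_altLen (hl : IsLabeling i j k)
    (hv : AffineIndependent ℝ v) (hT : IsAcute v) :
    ∃ p ∈ segment ℝ (v j) (v k), dist (v i) p = altLen v i := by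
  obtain ⟨φ, hφ⟩ := hl.exists_altTri hv
  have foot_mem := mem_image_of_mem φ.toAffineEquiv.toAffineMap (zero_mem_segment_altTri
    (h := edgeLen v j * sin (ang v k)) (mul_pos (edgeLen_pos hv k) (hT.cos_ang_pos j))
    (mul_pos (edgeLen_pos hv j) (hT.cos_ang_pos k)))
  rw [image_segment] at foot_mem
  refine ⟨φ 0, ?_, ?_⟩
  · change _ ∈ segment ℝ ((v ∘ ![i, j, k]) 1) ((v ∘ ![i, j, k]) 2)
    rwa [← hφ]
  · change dist ((v ∘ ![i, j, k]) 0) _ = _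
    rw [← hφ, Function.comp_apply, φ.dist_map, hl.altLen_eq_edgeLen_mul_sin_ang hv hT]
    exact dist_altTri_zero_zero (mul_pos (edgeLen_pos hv j) (sin_ang_pos hv k)).le

end TriBasis

section Homeo

variable {v v' v'' : Fin 3 → E2} {f f' g : E2 → E2} {i j k : Fin 3}

theorem IsLabelHomeo.of_invOn (hf : ContinuousOn f (Tri v)) (hg : ContinuousOn g (Tri v'))
    (hfT : MapsTo f (Tri v) (Tri v')) (hgT : MapsTo g (Tri v') (Tri v))
    (hgf : InvOn g f (Tri v) (Tri v')) (hfv : ∀ i, f (v i) = v' i) : IsLabelHomeo v v' f :=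
  ⟨hf, hgf.bijOn hfT hgT, ⟨g, hg, hgf⟩, hfv⟩

theorem IsLabelHomeo.comp (hf' : IsLabelHomeo v' v'' f') (hf : IsLabelHomeo v v' f) :
    IsLabelHomeo v v'' (f' ∘ f) := by
  obtain ⟨hf_cont, hf_bij, ⟨g, hg_cont, hg_inv⟩, hfv⟩ := hf
  obtain ⟨hf'_cont, hf'_bij, ⟨g', hg'_cont, hg'_inv⟩, hf'v⟩ := hf'
  have hg'T : MapsTo g' (Tri v'') (Tri v') := (hf'_bij.symm hg'_inv.symm).mapsTo
  exact ⟨hf'_cont.comp hf_cont hf_bij.mapsTo, hf'_bij.comp hf_bij,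
    ⟨g ∘ g', hg_cont.comp hg'_cont hg'T, hg_inv.comp hg'_inv hf_bij.mapsTo hg'T⟩,
    fun i => by rw [Function.comp_apply, hfv, hf'v]⟩

theorem isLabelHomeo_affineIsometryEquiv (φ : E2 ≃ᵃⁱ[ℝ] E2) (v : Fin 3 → E2) :
    IsLabelHomeo v (φ ∘ v) φ := by
  have hT := tri_affineIsometryEquiv_comp φ v
  refine .of_invOn (g := φ.symm) φ.continuous.continuousOn φ.symm.continuous.continuousOn
    (hT ▸ mapsTo_image φ _) (fun y hy => ?_)
    ⟨fun x _ => φ.symm_apply_apply x, fun y _ => φ.apply_symm_apply y⟩ fun i => rfl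
  rw [hT] at hy
  obtain ⟨x, hx, rfl⟩ := hy
  rwa [φ.symm_apply_apply]

theorem IsLabelHomeo.of_comp (hl : IsLabeling i j k)
    (hf : IsLabelHomeo (v ∘ ![i, j, k]) (v' ∘ ![i, j, k]) f) : IsLabelHomeo v v' f := by
  obtain ⟨hf_cont, hf_bij, hg, hfv⟩ := hf
  rw [hl.tri_comp] at hf_cont hf_bij hg
  rw [hl.tri_comp] at hf_bij hg
  exact ⟨hf_cont, hf_bij, hg, hl.bijective.surjective.forall.2 hfv⟩

theorem lipConst_le_iff {K : NNReal} : lipConst v f ≤ K ↔ LipschitzOnWith K f (Tri v) := by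
  simp only [lipConst, iSup_le_iff, LipschitzOnWith,
    ENNReal.div_le_iff_le_mul (.inr coe_ne_top) (.inl (edist_ne_top _ _))]

end Homeo

section Stretch

variable {a b h a' b' h' k₁ k₂ k₃ l₁ l₂ : ℝ} {K : NNReal}

/-- The piecewise linear map of the line with slope `k₁` on the negative and `k₂` on the positive
half-line, fixing `0`. -/
def twoSlope (k₁ k₂ s : ℝ) : ℝ := k₁ * min s 0 + k₂ * max s 0

theorem twoSlope_of_nonneg {s : ℝ} (hs : 0 ≤ s) : twoSlope k₁ k₂ s = k₂ * s := by
  simp [twoSlope, hs]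

theorem twoSlope_of_nonpos {s : ℝ} (hs : s ≤ 0) : twoSlope k₁ k₂ s = k₁ * s := by
  simp [twoSlope, hs]

theorem monotone_twoSlope (hk₁ : 0 ≤ k₁) (hk₂ : 0 ≤ k₂) : Monotone (twoSlope k₁ k₂) :=
  fun s t hst => by unfold twoSlope; gcongr

theorem twoSlope_twoSlope (hk₁ : 0 ≤ k₁) (hk₂ : 0 ≤ k₂) (s : ℝ) :
    twoSlope l₁ l₂ (twoSlope k₁ k₂ s) = twoSlope (l₁ * k₁) (l₂ * k₂) s := by
  rcases le_total 0 s with hs | hs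
  · rw [twoSlope_of_nonneg hs, twoSlope_of_nonneg hs, twoSlope_of_nonneg (by positivity), mul_assoc]
  · rw [twoSlope_of_nonpos hs, twoSlope_of_nonpos hs,
      twoSlope_of_nonpos (mul_nonpos_of_nonneg_of_nonpos hk₁ hs), mul_assoc]

theorem twoSlope_one_one (s : ℝ) : twoSlope 1 1 s = s := by
  rw [twoSlope, one_mul, one_mul, min_add_max, add_zero]

theorem continuous_twoSlope : Continuous (twoSlope k₁ k₂) := by
  unfold twoSlope
  fun_prop

theorem twoSlope_mem_Icc (ha : 0 < a) (hb : 0 < b) (ha' : 0 < a') (hb' : 0 < b') {s t : ℝ}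
    (ht : 0 ≤ t) (hs : s ∈ Icc (-(a * t)) (b * t)) :
    twoSlope (a' / a) (b' / b) s ∈ Icc (-(a' * t)) (b' * t) := by
  have mono := monotone_twoSlope (div_pos ha' ha).le (div_pos hb' hb).le
  have left : twoSlope (a' / a) (b' / b) (-(a * t)) = -(a' * t) := by
    rw [twoSlope_of_nonpos (neg_nonpos.2 (by positivity))]
    field_simp
  have right : twoSlope (a' / a) (b' / b) (b * t) = b' * t := by
    rw [twoSlope_of_nonneg (by positivity)]
    field_simp
  exact ⟨left ▸ mono hs.1, right ▸ mono hs.2⟩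

theorem lipschitzWith_twoSlope (hk₁ : 0 ≤ k₁) (hk₂ : 0 ≤ k₂) (h₁ : k₁ ≤ K) (h₂ : k₂ ≤ K) :
    LipschitzWith K (twoSlope k₁ k₂) := by
  refine LipschitzWith.of_le_add_mul K fun s t => ?_
  rw [Real.dist_eq]
  rcases le_total s t with hst | hts
  · exact (monotone_twoSlope hk₁ hk₂ hst).trans (le_add_of_nonneg_right (by positivity))
  have neg_part : k₁ * (min s 0 - min t 0) ≤ K * (min s 0 - min t 0) :=
    mul_le_mul_of_nonneg_right h₁ (sub_nonneg.2 (min_le_min_right 0 hts))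
  have pos_part : k₂ * (max s 0 - max t 0) ≤ K * (max s 0 - max t 0) :=
    mul_le_mul_of_nonneg_right h₂ (sub_nonneg.2 (max_le_max_right 0 hts))
  rw [abs_of_nonneg (sub_nonneg.2 hts), twoSlope, twoSlope]
  linear_combination neg_part + pos_part + K * min_add_max s 0 - K * min_add_max t 0

/-- The homeomorphism of the plane scaling the second coordinate by `k₃` and the first one by `k₁`
to the left and by `k₂` to the right of the vertical axis. -/
def stretch (k₁ k₂ k₃ : ℝ) (x : E2) : E2 := !₂[twoSlope k₁ k₂ (x 0), k₃ * x 1]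

theorem continuous_stretch : Continuous (stretch k₁ k₂ k₃) := by
  have := continuous_twoSlope (k₁ := k₁) (k₂ := k₂)
  unfold stretch
  fun_prop

theorem lipschitzWith_stretch (hk₁ : 0 ≤ k₁) (hk₂ : 0 ≤ k₂) (hk₃ : 0 ≤ k₃) (h₁ : k₁ ≤ K)
    (h₂ : k₂ ≤ K) (h₃ : k₃ ≤ K) : LipschitzWith K (stretch k₁ k₂ k₃) := by
  refine lipschitzWith_of_dist_apply_le fun x y i => ?_
  fin_cases i
  · exact (lipschitzWith_twoSlope hk₁ hk₂ h₁ h₂).dist_le_mul _ _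
  · simp only [stretch, Fin.mk_one, PiLp.toLp_apply, Matrix.cons_val_one, Matrix.cons_val_fin_one,
      Real.dist_eq, ← mul_sub, abs_mul, abs_of_nonneg hk₃]
    gcongr

theorem leftInverse_stretch (hk₁ : 0 < k₁) (hk₂ : 0 < k₂) (hk₃ : 0 < k₃) :
    Function.LeftInverse (stretch k₁⁻¹ k₂⁻¹ k₃⁻¹) (stretch k₁ k₂ k₃) := fun x => by
  ext i
  fin_cases i
  · simp [stretch, twoSlope_twoSlope, hk₁.le, hk₂.le, hk₁.ne', hk₂.ne', twoSlope_one_one]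
  · simp [stretch, hk₃.ne']

theorem mapsTo_stretch (ha : 0 < a) (hb : 0 < b) (hh : 0 < h) (ha' : 0 < a') (hb' : 0 < b')
    (hh' : 0 < h') : MapsTo (stretch (a' / a) (b' / b) (h' / h)) (Tri (altTri a b h))
      (Tri (altTri a' b' h')) := fun x hx => by
  rw [mem_tri_altTri_iff ha hb hh] at hx
  have height : stretch (a' / a) (b' / b) (h' / h) x 1 / h' = x 1 / h := by
    simp only [stretch, Matrix.cons_val_one, Matrix.cons_val_fin_one]
    field_simp
  rw [mem_tri_altTri_iff ha' hb' hh', height]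
  exact ⟨hx.1, twoSlope_mem_Icc ha hb ha' hb' (sub_nonneg.2 hx.1.2) hx.2⟩

theorem isLabelHomeo_stretch (ha : 0 < a) (hb : 0 < b) (hh : 0 < h) (ha' : 0 < a') (hb' : 0 < b')
    (hh' : 0 < h') : IsLabelHomeo (altTri a b h) (altTri a' b' h')
      (stretch (a' / a) (b' / b) (h' / h)) := by
  have left_inv := leftInverse_stretch (div_pos ha' ha) (div_pos hb' hb) (div_pos hh' hh)
  have right_inv := leftInverse_stretch (div_pos ha ha') (div_pos hb hb') (div_pos hh hh')
  simp only [inv_div] at left_inv right_inv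
  refine .of_invOn continuous_stretch.continuousOn continuous_stretch.continuousOn
    (mapsTo_stretch ha hb hh ha' hb' hh') (mapsTo_stretch ha' hb' hh' ha hb hh)
    ⟨left_inv.leftInvOn _, right_inv.leftInvOn _⟩ fun i => ?_
  ext l
  fin_cases i <;> fin_cases l <;> simp [stretch, altTri, twoSlope, ha.le, hb.le, ha.ne', hb.ne',
    hh.ne']

end Stretch

section Construction

open Real

variable {v v' : Fin 3 → E2} {i j k : Fin 3} {L : NNReal}

theorem ang_altTri_one {b p β : ℝ} (hp : 0 < p) (hb : 0 < p * cos β + b) (hβ : β ∈ Icc 0 π) :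
    ang (altTri (p * cos β) b (p * sin β)) 1 = β := by
  let u := altTri (p * cos β) b (p * sin β)
  have base : u 2 -ᵥ u 1 = (p * cos β + b) • !₂[(1 : ℝ), 0] := by
    ext l
    fin_cases l <;> simp [u, altTri, add_comm]
  have leg : u 0 -ᵥ u 1 = p • !₂[cos β, sin β] := by
    ext l
    fin_cases l <;> simp [u, altTri]
  change InnerProductGeometry.angle (u 2 -ᵥ u 1) (u 0 -ᵥ u 1) = β
  rw [base, leg, InnerProductGeometry.angle_smul_left_of_pos _ _ hb,
    InnerProductGeometry.angle_smul_right_of_pos _ _ hp, InnerProductGeometry.angle]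
  simp [EuclideanSpace.norm_eq, arccos_cos hβ.1 hβ.2, PiLp.inner_apply]

theorem ang_altTri_two {a q γ : ℝ} (hq : 0 < q) (ha : 0 < a + q * cos γ) (hγ : γ ∈ Icc 0 π) :
    ang (altTri a (q * cos γ) (q * sin γ)) 2 = γ := by
  let u := altTri a (q * cos γ) (q * sin γ)
  have leg : u 0 -ᵥ u 2 = q • !₂[-cos γ, sin γ] := by
    ext l
    fin_cases l <;> simp [u, altTri]
  have base : u 1 -ᵥ u 2 = (a + q * cos γ) • !₂[(-1 : ℝ), 0] := by
    ext l
    fin_cases l <;> simp [u, altTri, sub_eq_add_neg, add_comm]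
  change InnerProductGeometry.angle (u 0 -ᵥ u 2) (u 1 -ᵥ u 2) = γ
  rw [leg, base, InnerProductGeometry.angle_smul_left_of_pos _ _ hq,
    InnerProductGeometry.angle_smul_right_of_pos _ _ ha, InnerProductGeometry.angle]
  simp [EuclideanSpace.norm_eq, arccos_cos hγ.1 hγ.2, PiLp.inner_apply]

theorem IsLabeling.exists_edgeLen_eq_ang_eq_ang_eq (hl : IsLabeling i j k) {c β γ : ℝ} (hc : 0 < c)
    (hβ : 0 < β) (hγ : 0 < γ) (hβγ : β + γ < π) :
    ∃ w, AffineIndependent ℝ w ∧ edgeLen w i = c ∧ ang w j = β ∧ ang w k = γ := by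
  have sin_β : 0 < sin β := sin_pos_of_pos_of_lt_pi hβ (by linarith)
  have sin_γ : 0 < sin γ := sin_pos_of_pos_of_lt_pi hγ (by linarith)
  have sin_sum : 0 < sin (β + γ) := sin_pos_of_pos_of_lt_pi (add_pos hβ hγ) hβγ
  let p := c * sin γ / sin (β + γ)
  let q := c * sin β / sin (β + γ)
  have base : p * cos β + q * cos γ = c := by
    simp only [p, q]
    field_simp
    rw [sin_add]
    ring
  have height : p * sin β = q * sin γ := by
    simp only [p, q]
    ring
  obtain ⟨w, hw⟩ := hl.bijective.injective.surjective_comp_right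
    (altTri (p * cos β) (q * cos γ) (p * sin β))
  have edge : edgeLen w i = edgeLen (w ∘ ![i, j, k]) 0 := hl.edgeLen_eq w
  have ang_j : ang w j = ang (w ∘ ![i, j, k]) 1 := hl.rotate.ang_eq w
  have ang_k : ang w k = ang (w ∘ ![i, j, k]) 2 := hl.rotate.rotate.ang_eq w
  refine ⟨w, ?_⟩
  rw [← hl.affineIndependent_comp_iff, edge, ang_j, ang_k, show w ∘ ![i, j, k] = _ from hw]
  refine ⟨affineIndependent_altTri (base.symm ▸ hc) (by positivity),
    (edgeLen_altTri_zero (base.symm ▸ hc)).trans base,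
    ang_altTri_one (by positivity) (base.symm ▸ hc) ⟨hβ.le, by linarith⟩, ?_⟩
  rw [height]
  exact ang_altTri_two (by positivity) (base.symm ▸ hc) ⟨hγ.le, by linarith⟩

theorem IsLabeling.sq_edgeLen_mul_cos_ang (hl : IsLabeling i j k) (hv : AffineIndependent ℝ v)
    (hT : IsAcute v) : (edgeLen v j * cos (ang v k)) ^ 2 = edgeLen v j ^ 2 - altLen v i ^ 2 := by
  rw [hl.altLen_eq_edgeLen_mul_sin_ang hv hT]
  linear_combination edgeLen v j ^ 2 * sin_sq_add_cos_sq (ang v k)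

theorem IsLabeling.edgeLen_mul_cos_ang_le (hl : IsLabeling i j k) (hv : AffineIndependent ℝ v)
    (hT : IsAcute v) (hv' : AffineIndependent ℝ v') (hT' : IsAcute v')
    (hi : altLen v' i = L * altLen v i) (hj : edgeLen v' j ≤ L * edgeLen v j) :
    edgeLen v' j * cos (ang v' k) ≤ L * (edgeLen v j * cos (ang v k)) := by
  have hnonneg : 0 ≤ edgeLen v j * cos (ang v k) :=
    mul_nonneg (edgeLen_pos hv j).le (hT.cos_ang_pos k).le
  refine le_of_sq_le_sq ?_ (by positivity)
  have hsq : edgeLen v' j ^ 2 ≤ (L * edgeLen v j) ^ 2 :=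
    pow_le_pow_left₀ (edgeLen_pos hv' j).le hj 2
  rw [mul_pow _ (_ * _), hl.sq_edgeLen_mul_cos_ang hv hT, hl.sq_edgeLen_mul_cos_ang hv' hT', hi]
  linarith

theorem exists_isLabelHomeo_of_affineIsometryEquiv_comp_altTri {a b h a' b' h' : ℝ}
    {φ φ' : E2 ≃ᵃⁱ[ℝ] E2} (hφ : φ ∘ altTri a b h = v) (hφ' : φ' ∘ altTri a' b' h' = v')
    (ha : 0 < a) (hb : 0 < b) (hh : 0 < h) (ha' : 0 < a') (hb' : 0 < b') (hh' : 0 < h')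
    (haL : a' ≤ L * a) (hbL : b' ≤ L * b) (hhL : h' ≤ L * h) :
    ∃ f, IsLabelHomeo v v' f ∧ LipschitzOnWith L f (Tri v) := by
  have φ_symm_comp : φ.symm ∘ v = altTri a b h := by
    rw [← hφ]
    exact funext fun l => φ.symm_apply_apply _
  have homeo_φ_symm := isLabelHomeo_affineIsometryEquiv φ.symm v
  have homeo_φ' := isLabelHomeo_affineIsometryEquiv φ' (altTri a' b' h')
  rw [φ_symm_comp] at homeo_φ_symm
  rw [hφ'] at homeo_φ'
  have lip := lipschitzWith_stretch (div_pos ha' ha).le (div_pos hb' hb).le (div_pos hh' hh).le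
    ((div_le_iff₀ ha).2 haL) ((div_le_iff₀ hb).2 hbL) ((div_le_iff₀ hh).2 hhL)
  refine ⟨_, homeo_φ'.comp ((isLabelHomeo_stretch ha hb hh ha' hb' hh').comp homeo_φ_symm),
    LipschitzWith.lipschitzOnWith ?_⟩
  simpa only [one_mul, mul_one] using
    φ'.isometry.lipschitz.comp (lip.comp φ.symm.isometry.lipschitz)

theorem IsLabeling.exists_isLabelHomeo_of_altLen_eq (hl : IsLabeling i j k)
    (hv : AffineIndependent ℝ v) (hT : IsAcute v) (hv' : AffineIndependent ℝ v') (hT' : IsAcute v')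
    (hi : altLen v' i = L * altLen v i) (hj : edgeLen v' j ≤ L * edgeLen v j)
    (hk : edgeLen v' k ≤ L * edgeLen v k) :
    ∃ f, IsLabelHomeo v v' f ∧ LipschitzOnWith L f (Tri v) := by
  obtain ⟨φ, hφ⟩ := hl.exists_altTri hv
  obtain ⟨φ', hφ'⟩ := hl.exists_altTri hv'
  have height_le : edgeLen v' j * sin (ang v' k) ≤ L * (edgeLen v j * sin (ang v k)) := by
    rw [← hl.altLen_eq_edgeLen_mul_sin_ang hv hT, ← hl.altLen_eq_edgeLen_mul_sin_ang hv' hT', hi]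
  obtain ⟨f, hf, hfL⟩ := exists_isLabelHomeo_of_affineIsometryEquiv_comp_altTri hφ hφ'
    (mul_pos (edgeLen_pos hv k) (hT.cos_ang_pos j)) (mul_pos (edgeLen_pos hv j) (hT.cos_ang_pos k))
    (mul_pos (edgeLen_pos hv j) (sin_ang_pos hv k))
    (mul_pos (edgeLen_pos hv' k) (hT'.cos_ang_pos j))
    (mul_pos (edgeLen_pos hv' j) (hT'.cos_ang_pos k))
    (mul_pos (edgeLen_pos hv' j) (sin_ang_pos hv' k))
    (hl.swap.edgeLen_mul_cos_ang_le hv hT hv' hT' hi hk)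
    (hl.edgeLen_mul_cos_ang_le hv hT hv' hT' hi hj) height_le
  exact ⟨f, hf.of_comp hl, hl.tri_comp v ▸ hfL⟩

theorem IsLabeling.exists_isLabelHomeo_of_ang_eq (hl : IsLabeling i j k)
    (hv : AffineIndependent ℝ v) (hT : IsAcute v) (hv' : AffineIndependent ℝ v') (hT' : IsAcute v')
    (hi : edgeLen v' i = L * edgeLen v i) (hj : ang v' j = ang v j) (hk : ang v' k ≤ ang v k) :
    ∃ f, IsLabelHomeo v v' f ∧ LipschitzOnWith L f (Tri v) := by
  have ang_i_le : ang v i ≤ ang v' i := by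
    linarith [hl.ang_add_ang_add_ang hv, hl.ang_add_ang_add_ang hv']
  have sin_le : sin (ang v i) ≤ sin (ang v' i) :=
    sin_le_sin_of_le_of_le_pi_div_two (by linarith [ang_nonneg v i, pi_pos]) (hT' i).le ang_i_le
  refine hl.rotate.rotate.exists_isLabelHomeo_of_altLen_eq hv hT hv' hT' ?_ hi.le ?_
  · rw [hl.rotate.rotate.altLen_eq_edgeLen_mul_sin_ang hv hT,
      hl.rotate.rotate.altLen_eq_edgeLen_mul_sin_ang hv' hT', hi, hj, mul_assoc]
  · refine le_of_mul_le_mul_right ?_ (sin_ang_pos hv' i)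
    calc
      edgeLen v' j * sin (ang v' i) = L * (edgeLen v j * sin (ang v i)) := by
        rw [← hl.edgeLen_mul_sin_ang, ← hl.edgeLen_mul_sin_ang, hi, hj, mul_assoc]
      _ ≤ L * (edgeLen v j * sin (ang v' i)) := by
        gcongr
        exact (edgeLen_pos hv j).le
      _ = L * edgeLen v j * sin (ang v' i) := (mul_assoc _ _ _).symm

theorem IsLabeling.exists_isLabelHomeo_of_ang_le (hl : IsLabeling i j k)
    (hv : AffineIndependent ℝ v) (hT : IsAcute v) (hv' : AffineIndependent ℝ v') (hT' : IsAcute v')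
    (hi : edgeLen v' i = L * edgeLen v i) (hj : ang v' j ≤ ang v j) (hk : ang v' k ≤ ang v k) :
    ∃ f, IsLabelHomeo v v' f ∧ LipschitzOnWith L f (Tri v) := by
  have sum' := hl.ang_add_ang_add_ang hv'
  obtain ⟨w, hw, hwi, hwj, hwk⟩ := hl.exists_edgeLen_eq_ang_eq_ang_eq (edgeLen_pos hv' i)
    (ang_pos hv j) (ang_pos hv' k) (by linarith [hT j, hT' k])
  have sum_w := hl.ang_add_ang_add_ang hw
  have hW : IsAcute w := fun l => by
    rcases hl.eq_or l with rfl | rfl | rfl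
    · linarith [hT' l]
    · exact hwj ▸ hT l
    · exact hwk ▸ hT' l
  obtain ⟨f, hf, hfL⟩ := hl.exists_isLabelHomeo_of_ang_eq (L := L) hv hT hw hW (hwi.trans hi) hwj
    (hwk ▸ hk)
  obtain ⟨f', hf', hfL'⟩ := hl.swap.exists_isLabelHomeo_of_ang_eq (L := 1) hw hW hv' hT'
    (by rw [hwi, NNReal.coe_one, one_mul]) hwk.symm (hwj ▸ hj)
  exact ⟨f' ∘ f, hf'.comp hf, one_mul L ▸ hfL'.comp hfL hf.2.1.mapsTo⟩

theorem IsLabeling.ang_le_ang (hl : IsLabeling i j k) (hv : AffineIndependent ℝ v)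
    (hT : IsAcute v) (hv' : AffineIndependent ℝ v') (hT' : IsAcute v')
    (hi : edgeLen v' i = L * edgeLen v i) (hj : altLen v' j ≤ L * altLen v j) :
    ang v' k ≤ ang v k := by
  rw [hl.rotate.swap.altLen_eq_edgeLen_mul_sin_ang hv hT,
    hl.rotate.swap.altLen_eq_edgeLen_mul_sin_ang hv' hT', ← mul_assoc, ← hi,
    mul_le_mul_iff_right₀ (edgeLen_pos hv' i)] at hj
  have mem_Icc {u : Fin 3 → E2} (hu : IsAcute u) : ang u k ∈ Icc (-(π / 2)) (π / 2) :=
    ⟨by linarith [ang_nonneg u k, pi_pos], (hu k).le⟩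
  exact (strictMonoOn_sin.le_iff_le (mem_Icc hT') (mem_Icc hT)).1 hj

theorem exists_isLabelHomeo_lipschitzOnWith (hv : AffineIndependent ℝ v) (hT : IsAcute v)
    (hv' : AffineIndependent ℝ v') (hT' : IsAcute v')
    (hedge : ∀ i, edgeLen v' i ≤ L * edgeLen v i) (halt : ∀ i, altLen v' i ≤ L * altLen v i)
    (heq : ∃ i, edgeLen v' i = L * edgeLen v i ∨ altLen v' i = L * altLen v i) :
    ∃ f, IsLabelHomeo v v' f ∧ LipschitzOnWith L f (Tri v) := by
  obtain ⟨i, hi⟩ := heq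
  have hl := isLabeling_add_one_add_two i
  rcases hi with hi | hi
  · exact hl.exists_isLabelHomeo_of_ang_le hv hT hv' hT' hi
      (hl.swap.ang_le_ang hv hT hv' hT' hi (halt _)) (hl.ang_le_ang hv hT hv' hT' hi (halt _))
  · exact hl.exists_isLabelHomeo_of_altLen_eq hv hT hv' hT' hi (hedge _) (hedge _)

end Construction

section Edge

variable {v v' : Fin 3 → E2} {f : E2 → E2} {x : E2} {i j k : Fin 3} {K : NNReal}

/-- The edge opposite to vertex `i`. -/
def edge (v : Fin 3 → E2) (i : Fin 3) : Set E2 := segment ℝ (v (i + 1)) (v (i + 2))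

theorem edge_subset_tri (v : Fin 3 → E2) (i : Fin 3) : edge v i ⊆ Tri v :=
  (convex_convexHull ℝ _).segment_subset (apply_mem_tri v _) (apply_mem_tri v _)

theorem isClosed_edge (v : Fin 3 → E2) (i : Fin 3) : IsClosed (edge v i) := by
  rw [edge, ← closure_openSegment]
  exact isClosed_closure

theorem mem_tri_iff (hv : AffineIndependent ℝ v) :
    x ∈ Tri v ↔ ∀ i, 0 ≤ (triBasis hv).coord i x :=
  Set.ext_iff.1 (triBasis hv).convexHull_eq_nonneg_coord x

theorem mem_interior_tri_iff (hv : AffineIndependent ℝ v) :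
    x ∈ interior (Tri v) ↔ ∀ i, 0 < (triBasis hv).coord i x :=
  Set.ext_iff.1 (triBasis hv).interior_convexHull x

theorem nonempty_interior_tri (hv : AffineIndependent ℝ v) : (interior (Tri v)).Nonempty :=
  ⟨_, (triBasis hv).centroid_mem_interior_convexHull⟩

theorem mem_edge_iff (hv : AffineIndependent ℝ v) :
    x ∈ edge v i ↔ x ∈ Tri v ∧ (triBasis hv).coord i x = 0 := by
  have hl := isLabeling_add_one_add_two i
  refine ⟨fun hx => ⟨edge_subset_tri v i hx, ?_⟩, fun ⟨hx, hxi⟩ => ?_⟩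
  · have hcoord := mem_image_of_mem ((triBasis hv).coord i) hx
    rwa [edge, image_segment, coord_triBasis_of_ne hv hl.1, coord_triBasis_of_ne hv hl.2.2.symm,
      segment_same, mem_singleton_iff] at hcoord
  · have sum_coord := (triBasis hv).sum_coord_apply_eq_one x
    have comb := (triBasis hv).linear_combination_coord_eq_self x
    rw [hl.sum_eq, hxi, zero_add] at sum_coord
    rw [hl.sum_eq, hxi, zero_smul, zero_add] at comb
    exact ⟨_, _, (mem_tri_iff hv).1 hx _, (mem_tri_iff hv).1 hx _, sum_coord, comb⟩

theorem exists_mem_edge_iff (hv : AffineIndependent ℝ v) (hx : x ∈ Tri v) :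
    (∃ i, x ∈ edge v i) ↔ x ∉ interior (Tri v) := by
  simp only [mem_interior_tri_iff hv, mem_edge_iff hv, hx, true_and, not_forall, not_lt]
  exact exists_congr fun i => ⟨Eq.le, fun h => h.antisymm ((mem_tri_iff hv).1 hx i)⟩

theorem ne_of_apply_mem_edge (hv : AffineIndependent ℝ v) (h : v j ∈ edge v i) : i ≠ j := by
  rintro rfl
  exact one_ne_zero (((triBasis hv).coord_apply_eq i).symm.trans ((mem_edge_iff hv).1 h).2)

theorem IsLabeling.eq_of_mem_edge (hl : IsLabeling i j k) (hv : AffineIndependent ℝ v)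
    (hi : x ∈ edge v i) (hj : x ∈ edge v j) : x = v k := by
  have coord_i := ((mem_edge_iff hv).1 hi).2
  have coord_j := ((mem_edge_iff hv).1 hj).2
  have sum_coord := (triBasis hv).sum_coord_apply_eq_one x
  rw [hl.sum_eq, coord_i, coord_j, zero_add, zero_add] at sum_coord
  have comb := (triBasis hv).linear_combination_coord_eq_self x
  rw [hl.sum_eq, coord_i, coord_j, sum_coord, zero_smul, zero_smul, zero_add, zero_add,
    one_smul] at comb
  exact comb.symm

theorem apply_notMem_openSegment (hv : AffineIndependent ℝ v) (i l : Fin 3) :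
    v l ∉ openSegment ℝ (v (i + 1)) (v (i + 2)) := by
  have hl := isLabeling_add_one_add_two i
  intro h
  rcases hl.eq_or l with rfl | rfl | rfl
  · exact ne_of_apply_mem_edge hv (openSegment_subset_segment ℝ _ _ h) rfl
  · exact hl.2.1 (hv.injective (left_mem_openSegment_iff.1 h))
  · exact hl.2.1 (hv.injective (right_mem_openSegment_iff.1 h))

theorem IsLabelHomeo.exists_mem_edge (hf : IsLabelHomeo v v' f) (hv : AffineIndependent ℝ v)
    (hv' : AffineIndependent ℝ v') (hx : x ∈ edge v i) : ∃ j, f x ∈ edge v' j := by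
  obtain ⟨hf_cont, hf_bij, ⟨g, hg_cont, hgf⟩, -⟩ := hf
  have hxT := edge_subset_tri v i hx
  rw [exists_mem_edge_iff hv' (hf_bij.mapsTo hxT)]
  exact notMem_interior_of_finrank_eq_two finrank_euclideanSpace_fin (convex_convexHull ℝ _)
    (nonempty_interior_tri hv) hf_cont hf_bij.injOn hg_cont (hf_bij.symm hgf.symm).mapsTo hgf.2 hxT
    ((exists_mem_edge_iff hv hxT).1 ⟨i, hx⟩)

theorem IsLabelHomeo.mapsTo_edge (hf : IsLabelHomeo v v' f) (hv : AffineIndependent ℝ v)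
    (hv' : AffineIndependent ℝ v') (i : Fin 3) : MapsTo f (edge v i) (edge v' i) := by
  let s := openSegment ℝ (v (i + 1)) (v (i + 2))
  have hsi : s ⊆ edge v i := openSegment_subset_segment ℝ _ _
  have hs : IsPreconnected (f '' s) := (convex_openSegment _ _).isPreconnected.image f
    (hf.1.mono (hsi.trans (edge_subset_tri v i)))
  have hdisj : ∀ j k, j ≠ k → f '' s ∩ (edge v' j ∩ edge v' k) = ∅ := fun j k hjk => by
    refine eq_empty_of_forall_notMem ?_
    rintro _ ⟨⟨x, hx, rfl⟩, hj, hk⟩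
    obtain ⟨l, hl⟩ := exists_isLabeling hjk
    have hxl : x = v l := hf.2.1.injOn (edge_subset_tri v i (hsi hx)) (apply_mem_tri v l)
      ((hl.eq_of_mem_edge hv' hj hk).trans (hf.2.2.2 l).symm)
    exact apply_notMem_openSegment hv i l (hxl ▸ hx)
  have hne : (f '' s).Nonempty := ⟨_, mem_image_of_mem f (midpoint_mem_openSegment _ _)⟩
  obtain ⟨j, hj⟩ := exists_subset_of_isPreconnected hs hne
    (isClosed_edge v') (image_subset_iff.2 fun x hx => mem_iUnion.2
      (hf.exists_mem_edge hv hv' (hsi hx))) hdisj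
  have hmaps : MapsTo f (edge v i) (edge v' j) := by
    have := (mapsTo_iff_image_subset.2 hj).closure_of_continuousOn (hf.1.mono ?_)
    · rwa [closure_openSegment, (isClosed_edge v' j).closure_eq] at this
    · rw [closure_openSegment]
      exact edge_subset_tri v i
  have hj₁ : v' (i + 1) ∈ edge v' j := hf.2.2.2 (i + 1) ▸ hmaps (left_mem_segment ℝ _ _)
  have hj₂ : v' (i + 2) ∈ edge v' j := hf.2.2.2 (i + 2) ▸ hmaps (right_mem_segment ℝ _ _)
  obtain rfl := ((isLabeling_add_one_add_two i).eq_or j).resolve_right <| not_or.2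
    ⟨ne_of_apply_mem_edge hv' hj₁, ne_of_apply_mem_edge hv' hj₂⟩
  exact hmaps

theorem IsLabelHomeo.edgeLen_le (hf : IsLabelHomeo v v' f) (hK : LipschitzOnWith K f (Tri v))
    (i : Fin 3) : edgeLen v' i ≤ K * edgeLen v i := by
  rw [edgeLen, ← hf.2.2.2, ← hf.2.2.2]
  exact hK.dist_le_mul _ (apply_mem_tri v _) _ (apply_mem_tri v _)

theorem IsLabelHomeo.altLen_le (hf : IsLabelHomeo v v' f) (hv : AffineIndependent ℝ v)
    (hT : IsAcute v) (hv' : AffineIndependent ℝ v') (hK : LipschitzOnWith K f (Tri v))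
    (i : Fin 3) : altLen v' i ≤ K * altLen v i := by
  obtain ⟨p, hp, hpi⟩ :=
    (isLabeling_add_one_add_two i).exists_mem_segment_dist_eq_altLen hv hT
  calc
    altLen v' i ≤ dist (f (v i)) (f p) := by
      rw [hf.2.2.2]
      exact infDist_le_dist_of_mem (segment_subset_affineSpan _ _ (hf.mapsTo_edge hv hv' i hp))
    _ ≤ K * dist (v i) p := hK.dist_le_mul _ (apply_mem_tri v i) _ (edge_subset_tri v i hp)
    _ = K * altLen v i := by rw [hpi]

end Edge

section Ratio

variable {v v' : Fin 3 → E2} {f : E2 → E2}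

theorem isGreatest_Mdist (v v' : Fin 3 → E2) :
    IsGreatest (range (fun i => edgeLen v' i / edgeLen v i) ∪
      range fun i => altLen v' i / altLen v i) (Mdist v v') :=
  (isGreatest_range_max_max _).union (isGreatest_range_max_max _)

theorem IsAcute.altLen_pos (hT : IsAcute v) (hv : AffineIndependent ℝ v) (i : Fin 3) :
    0 < altLen v i := by
  rw [(isLabeling_add_one_add_two i).altLen_eq_edgeLen_mul_sin_ang hv hT]
  exact mul_pos (edgeLen_pos hv _) (sin_ang_pos hv _)

theorem Mdist_nonneg (v v' : Fin 3 → E2) : 0 ≤ Mdist v v' :=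
  (div_nonneg dist_nonneg dist_nonneg).trans ((isGreatest_Mdist v v').2 (.inl ⟨0, rfl⟩))

theorem IsLabelHomeo.ofReal_Mdist_le_lipConst (hf : IsLabelHomeo v v' f)
    (hv : AffineIndependent ℝ v) (hT : IsAcute v) (hv' : AffineIndependent ℝ v') :
    ENNReal.ofReal (Mdist v v') ≤ lipConst v f := by
  rcases eq_or_ne (lipConst v f) ∞ with htop | htop
  · exact htop ▸ le_top
  lift lipConst v f to NNReal using htop with K hK
  have hlip := lipConst_le_iff.1 hK.ge
  refine ENNReal.ofReal_le_of_le_toReal ?_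
  rcases (isGreatest_Mdist v v').1 with ⟨i, hi⟩ | ⟨i, hi⟩ <;> rw [← hi]
  · exact (div_le_iff₀ (edgeLen_pos hv i)).2 (hf.edgeLen_le hlip i)
  · exact (div_le_iff₀ (hT.altLen_pos hv i)).2 (hf.altLen_le hv hT hv' hlip i)

theorem exists_isLabelHomeo_lipConst_le (hv : AffineIndependent ℝ v) (hT : IsAcute v)
    (hv' : AffineIndependent ℝ v') (hT' : IsAcute v') :
    ∃ f, IsLabelHomeo v v' f ∧ lipConst v f ≤ ENNReal.ofReal (Mdist v v') := by
  obtain ⟨hmem, hub⟩ := isGreatest_Mdist v v'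
  lift Mdist v v' to NNReal using Mdist_nonneg v v' with M
  have heq : ∃ i, edgeLen v' i = M * edgeLen v i ∨ altLen v' i = M * altLen v i := by
    rcases hmem with ⟨i, hi⟩ | ⟨i, hi⟩
    · exact ⟨i, .inl ((div_eq_iff (edgeLen_pos hv i).ne').1 hi)⟩
    · exact ⟨i, .inr ((div_eq_iff (hT.altLen_pos hv i).ne').1 hi)⟩
  rw [ENNReal.ofReal_coe_nnreal]
  simp only [lipConst_le_iff]
  exact exists_isLabelHomeo_lipschitzOnWith hv hT hv' hT'
    (fun i => (div_le_iff₀ (edgeLen_pos hv i)).1 (hub (.inl ⟨i, rfl⟩)))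
    (fun i => (div_le_iff₀ (hT.altLen_pos hv i)).1 (hub (.inr ⟨i, rfl⟩))) heq

end Ratio

theorem stmt3 (v v' : Fin 3 → E2)
    (hv : AffineIndependent ℝ v) (hv' : AffineIndependent ℝ v')
    (hT : IsAcute v) (hT' : IsAcute v') :
    Lam v v' = ENNReal.ofReal (Mdist v v') ∧
    ∃ f : E2 → E2, IsLabelHomeo v v' f ∧
      lipConst v f = ENNReal.ofReal (Mdist v v') := by
  have lower : ∀ f, IsLabelHomeo v v' f → ENNReal.ofReal (Mdist v v') ≤ lipConst v f :=
    fun f hf => hf.ofReal_Mdist_le_lipConst hv hT hv'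
  obtain ⟨f, hf, upper⟩ := exists_isLabelHomeo_lipConst_le hv hT hv' hT'
  exact ⟨le_antisymm (iInf₂_le_of_le f hf upper) (le_iInf₂ lower), f, hf,
    le_antisymm upper (lower f hf)⟩
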